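/- arXiv:1803.00114 — 4 statements merged into one kernel-verified Lean document; each statement's English description precedes it below -/
import Mathlib

section
/- Let w = (w_1, …, w_m) be a positive weight vector, π a permutation of {1, …, m}, and 1 ≤ i < j ≤ m positions with w_{π_i} > w_{π_j}. Let π' be the permutation obtained from π by swapping the entries in positions i and j (π'_i = π_j, π'_j = π_i, and π'_k = π_k for k ∉ {i, j}). Then P_w(π) > P_w(π'). -/
open Finset

/-- The permutation probability: `P_w(π) = ∏_j w_{π_j} / (∑_{l=j}^m w_{π_l})`. -/
noncomputable def permProb {m : ℕ} (w : Fin m → ℝ) (π : Equiv.Perm (Fin m)) : ℝ :=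
  ∏ j : Fin m, w (π j) / ∑ l ∈ Finset.univ.filter (fun l => j ≤ l), w (π l)

/-!
The numerators of `permProb w π` multiply to `∏ k, w k` whatever `π` is, so only the tail sums in
the denominators matter. Swapping positions `i < j` leaves a tail sum unchanged unless the tail
contains `j` but not `i`; such a tail, for instance the one starting at `j`, trades `w (π j)` for
the larger `w (π i)`.
-/

section SumSwap

variable {α M : Type*} [DecidableEq α] {i j : α} {s : Finset α} {f : α → M}

theorem apply_le_apply_swap [Preorder M] {a : α} (hf : f j ≤ f i) (ha : a ≠ i) :
    f a ≤ f (Equiv.swap i j a) := by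
  obtain rfl | haj := eq_or_ne a j
  · rwa [Equiv.swap_apply_right]
  · rw [Equiv.swap_apply_of_ne_of_ne ha haj]

theorem sum_le_sum_apply_swap [AddCommMonoid M] [Preorder M] [AddLeftMono M]
    (hs : i ∈ s → j ∈ s) (hf : f j ≤ f i) :
    ∑ a ∈ s, f a ≤ ∑ a ∈ s, f (Equiv.swap i j a) := by
  by_cases hi : i ∈ s
  · have hsupp : {a | Equiv.swap i j a ≠ a} ⊆ (s : Set α) := fun a ha ↦ by
      obtain ⟨-, rfl | rfl⟩ := Equiv.swap_apply_ne_self_iff.mp ha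
      exacts [hi, hs hi]
    exact (Equiv.Perm.sum_comp _ s f hsupp).ge
  · exact sum_le_sum fun a ha ↦ apply_le_apply_swap hf (ne_of_mem_of_not_mem ha hi)

theorem sum_lt_sum_apply_swap [AddCommMonoid M] [PartialOrder M] [IsOrderedCancelAddMonoid M]
    (hi : i ∉ s) (hj : j ∈ s) (hf : f j < f i) :
    ∑ a ∈ s, f a < ∑ a ∈ s, f (Equiv.swap i j a) :=
  sum_lt_sum (fun _ ha ↦ apply_le_apply_swap hf.le (ne_of_mem_of_not_mem ha hi))
    ⟨j, hj, by rwa [Equiv.swap_apply_right]⟩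

end SumSwap

theorem permProb_eq_prod_div_prod {m : ℕ} (w : Fin m → ℝ) (π : Equiv.Perm (Fin m)) :
    permProb w π = (∏ k, w k) / ∏ k, ∑ l with k ≤ l, w (π l) := by
  rw [permProb, prod_div_distrib, Equiv.prod_comp π w]

theorem permProb_lt_of_tail_sum_lt {m : ℕ} {w : Fin m → ℝ} (hw : ∀ k, 0 < w k)
    {σ π : Equiv.Perm (Fin m)}
    (hle : ∀ k, ∑ l with k ≤ l, w (π l) ≤ ∑ l with k ≤ l, w (σ l))
    (hlt : ∃ k, ∑ l with k ≤ l, w (π l) < ∑ l with k ≤ l, w (σ l)) :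
    permProb w σ < permProb w π := by
  have tail_pos (k : Fin m) : 0 < ∑ l with k ≤ l, w (π l) :=
    sum_pos (fun _ _ ↦ hw _) ⟨k, by simp⟩
  have prod_tail_lt : ∏ k, ∑ l with k ≤ l, w (π l) < ∏ k, ∑ l with k ≤ l, w (σ l) :=
    prod_lt_prod (fun k _ ↦ tail_pos k) (fun k _ ↦ hle k) (by simpa using hlt)
  rw [permProb_eq_prod_div_prod, permProb_eq_prod_div_prod]
  exact div_lt_div_of_pos_left (prod_pos fun k _ ↦ hw k) (prod_pos fun k _ ↦ tail_pos k)
    prod_tail_lt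

/-- Swapping two positions `i < j` with `w_{π_i} > w_{π_j}` strictly decreases the
permutation probability.  Here `π * Equiv.swap i j` is the permutation `π'` with
`π'_i = π_j`, `π'_j = π_i`, `π'_k = π_k` for `k ∉ {i, j}`. -/
theorem permProb_swap_lt {m : ℕ} (w : Fin m → ℝ) (hw : ∀ j, 0 < w j)
    (π : Equiv.Perm (Fin m)) (i j : Fin m) (hij : i < j) (hwij : w (π i) > w (π j)) :
    permProb w (π * Equiv.swap i j) < permProb w π := by
  refine permProb_lt_of_tail_sum_lt hw (fun k ↦ ?tail_le) ⟨j, ?tail_lt⟩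
  case tail_le =>
    have mem_tail : i ∈ ({l | k ≤ l} : Finset (Fin m)) → j ∈ ({l | k ≤ l} : Finset (Fin m)) := by
      simpa using fun hki : k ≤ i ↦ hki.trans hij.le
    exact sum_le_sum_apply_swap (f := fun l ↦ w (π l)) mem_tail hwij.le
  case tail_lt =>
    exact sum_lt_sum_apply_swap (f := fun l ↦ w (π l)) (by simpa using hij) (by simp) hwij
end

section
/- Let w = (w_1, …, w_m) be a positive weight vector and π a permutation of {1, …, m} such that w_{π_1} > w_{π_2} > ⋯ > w_{π_m}. Then for every permutation σ of {1, …, m} with σ ≠ π one has P_w(σ) < P_w(π); in particular, π is the unique maximizer of P_w over the symmetric group S_m. -/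
open Finset

/-!
The numerators of `P_w(π)` multiply to `∏ j, w j`, whatever `π` is, so only the tail sums in the
denominators matter. Each tail sum pairs `w ∘ π` with the increasing indicator of a final segment,
so by the rearrangement inequality the decreasing order minimizes all of them at once; an order
that is not decreasing makes at least one of them strictly larger.
-/

section Rearrangement

variable {ι M : Type*} {s : Finset ι} {v : ι → M}

-- `Antivary (· ∈ s) v` says that no value of `v` outside `s` is below a value inside `s`.
lemma antivary_ite_mem_iff [DecidableEq ι] [Preorder M] :
    Antivary (fun i => if i ∈ s then 1 else 0 : ι → ℕ) v ↔ Antivary (· ∈ s) v := by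
  refine forall₃_congr fun i j _ => ?_
  by_cases hi : i ∈ s <;> by_cases hj : j ∈ s <;> simp [hi, hj]

variable [Finite ι] [AddCommMonoid M] [LinearOrder M] [IsOrderedCancelAddMonoid M]

lemma sum_le_sum_comp_perm_of_antivary_mem (hv : Antivary (· ∈ s) v) (σ : Equiv.Perm ι) :
    ∑ i ∈ s, v i ≤ ∑ i ∈ s, v (σ i) := by
  classical
  cases nonempty_fintype ι
  simpa [ite_smul] using (antivary_ite_mem_iff.mpr hv).sum_smul_le_sum_smul_comp_perm (σ := σ)

lemma sum_lt_sum_comp_perm_iff_of_antivary_mem (hv : Antivary (· ∈ s) v) {σ : Equiv.Perm ι} :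
    ∑ i ∈ s, v i < ∑ i ∈ s, v (σ i) ↔ ¬ Antivary (· ∈ s) (v ∘ σ) := by
  classical
  cases nonempty_fintype ι
  have : PosSMulStrictMono ℕ M := ⟨fun _ hn _ _ h => nsmul_lt_nsmul_right hn.ne' h⟩
  rw [← antivary_ite_mem_iff, ← (antivary_ite_mem_iff.mpr hv).sum_smul_lt_sum_smul_comp_perm_iff]
  simp [ite_smul]

end Rearrangement

section Tail

variable {ι M : Type*} [LinearOrder ι] [LocallyFiniteOrderTop ι] [LinearOrder M]

lemma forall_antivary_mem_Ici_iff {v : ι → M} :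
    (∀ j, Antivary (· ∈ Ici j) v) ↔ Antitone v := by
  refine ⟨fun h i k hik => not_lt.mp fun hlt => ?_, fun h j => Monotone.antivary ?_ h⟩
  · have hki : k ≤ i := mem_Ici.mp (h k hlt (mem_Ici.mpr le_rfl))
    exact hlt.ne (congrArg v (hik.antisymm hki))
  · exact fun i k hik hi => mem_Ici.mpr ((mem_Ici.mp hi).trans hik)

variable [Finite ι] [AddCommMonoid M] [IsOrderedCancelAddMonoid M] {f : ι → M}
  {π σ : Equiv.Perm ι}

lemma sum_Ici_comp_le_of_antitone (hπ : Antitone (f ∘ π)) (σ : Equiv.Perm ι) (j : ι) :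
    ∑ l ∈ Ici j, f (π l) ≤ ∑ l ∈ Ici j, f (σ l) := by
  simpa using
    sum_le_sum_comp_perm_of_antivary_mem (forall_antivary_mem_Ici_iff.mpr hπ j) (π⁻¹ * σ)

lemma exists_sum_Ici_comp_lt_of_not_antitone (hπ : Antitone (f ∘ π)) (hσ : ¬ Antitone (f ∘ σ)) :
    ∃ j, ∑ l ∈ Ici j, f (π l) < ∑ l ∈ Ici j, f (σ l) := by
  obtain ⟨j, hj⟩ := not_forall.mp (mt forall_antivary_mem_Ici_iff.mp hσ)
  have hcomp : (f ∘ π) ∘ ⇑(π⁻¹ * σ) = f ∘ σ := by ext; simp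
  rw [← hcomp,
    ← sum_lt_sum_comp_perm_iff_of_antivary_mem (forall_antivary_mem_Ici_iff.mpr hπ j)] at hj
  exact ⟨j, by simpa using hj⟩

end Tail

section PermProb

variable {m : ℕ} {w : Fin m → ℝ} {π σ : Equiv.Perm (Fin m)}

lemma permProb_eq_prod_div_prod_sum_Ici (w : Fin m → ℝ) (π : Equiv.Perm (Fin m)) :
    permProb w π = (∏ j, w j) / ∏ j, ∑ l ∈ Ici j, w (π l) := by
  simp only [permProb, filter_le_eq_Ici, prod_div_distrib, Equiv.prod_comp π w]

lemma permProb_congr (h : w ∘ σ = w ∘ π) : permProb w σ = permProb w π := by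
  simp only [permProb, ← Function.comp_apply (f := w), h]

lemma permProb_lt_of_not_antitone (hw : ∀ j, 0 < w j) (hπ : Antitone (w ∘ π))
    (hσ : ¬ Antitone (w ∘ σ)) : permProb w σ < permProb w π := by
  have htail : ∀ j, 0 < ∑ l ∈ Ici j, w (π l) := fun j => sum_pos (fun l _ => hw (π l)) nonempty_Ici
  obtain ⟨j, hj⟩ := exists_sum_Ici_comp_lt_of_not_antitone hπ hσ
  rw [permProb_eq_prod_div_prod_sum_Ici, permProb_eq_prod_div_prod_sum_Ici]
  exact div_lt_div_of_pos_left (prod_pos fun i _ => hw i) (prod_pos fun i _ => htail i)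
    (prod_lt_prod (fun i _ => htail i) (fun i _ => sum_Ici_comp_le_of_antitone hπ σ i)
      ⟨j, mem_univ j, hj⟩)

lemma eq_of_strictAnti_comp_of_antitone_comp {α : Type*} [PartialOrder α] {f : Fin m → α}
    (hπ : StrictAnti (f ∘ π)) (hσ : Antitone (f ∘ σ)) : σ = π := by
  have hf : Function.Injective f := hπ.injective.of_comp_right π.surjective
  exact DFunLike.coe_injective (hf.comp_left (Tuple.unique_antitone hσ hπ.antitone))

theorem permProb_max_of_sorted_general (hw : ∀ j, 0 < w j) (hπ : Antitone (w ∘ π)) :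
    permProb w σ < permProb w π ↔ ¬ Antitone (w ∘ σ) :=
  ⟨fun hlt hσ => hlt.ne (permProb_congr (Tuple.unique_antitone hσ hπ)),
    permProb_lt_of_not_antitone hw hπ⟩

end PermProb

/-- If `π` sorts the weights in strictly decreasing order, `w_{π_1} > w_{π_2} > ⋯ > w_{π_m}`,
then `π` is the unique maximizer of the permutation probability over `S_m`. -/
theorem permProb_max_of_sorted {m : ℕ} (w : Fin m → ℝ) (hw : ∀ j, 0 < w j)
    (π : Equiv.Perm (Fin m)) (hsort : ∀ i j : Fin m, i < j → w (π j) < w (π i)) :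
    ∀ σ : Equiv.Perm (Fin m), σ ≠ π → permProb w σ < permProb w π := by
  have hπ : StrictAnti (w ∘ π) := fun i j => hsort i j
  exact fun σ hσ => (permProb_max_of_sorted_general hw hπ.antitone).mpr
    (mt (eq_of_strictAnti_comp_of_antitone_comp hπ) hσ)
end

section
/- Let w = (w_1, …, w_m) be a positive weight vector, let 1 ≤ k ≤ m, and let σ_1, …, σ_k be distinct elements of {1, …, m}. Then the sum of P_w(π) over all permutations π of {1, …, m} whose first k positions satisfy π_j = σ_j for j = 1, …, k equals ∏_{j=1}^k w_{σ_j} / (W − ∑_{t=1}^{j−1} w_{σ_t}), where W = ∑_{l=1}^m w_l. That is, the top-k marginal of the permutation probability is the partial product of the same sequential-sampling weights. -/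
open Finset

/-!
Draw items one at a time without replacement, each with probability proportional to its weight
among the items that remain. Fixing one more item of a prefix multiplies its probability by that of
the next draw, and the next-draw probabilities sum to `1` as long as an item remains. Hence the
probability of a prefix is the sum of the probabilities of its one-item extensions, and descending
induction on the length of the prefix reduces everything to full rankings.
-/

section SequentialSampling

variable {α K : Type*} [Fintype α] {k n : ℕ}

/-- The top-`k` probability: the probability that successive draws without replacement, with
weights `w`, produce `σ 0, …, σ (k - 1)` in this order. The weight still available at a draw is
written as the total weight minus the weight already drawn, which is its value when the entries of
`σ` are distinct. -/
def topkProb [Field K] (w : α → K) (σ : Fin k → α) : K :=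
  ∏ j, w (σ j) / (∑ a, w a - ∑ t with t < j, w (σ t))

theorem topkProb_snoc [Field K] (w : α → K) (σ : Fin k → α) (a : α) :
    topkProb w (Fin.snoc σ a : Fin (k + 1) → α) =
      topkProb w σ * (w a / (∑ b, w b - ∑ t, w (σ t))) := by
  simp [topkProb, Fin.prod_univ_castSucc, sum_filter, Fin.sum_univ_castSucc,
    Fin.castSucc_lt_last, (Fin.castSucc_lt_last _).not_gt, mul_div_mul_comm]

variable [DecidableEq α]

theorem sum_sub_sum_comp_eq_sum_notMem_range {ι : Type*} [Fintype ι] [AddCommGroup K]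
    (w : α → K) {σ : ι → α} (hσ : σ.Injective) :
    ∑ a, w a - ∑ t, w (σ t) = ∑ a with a ∉ Set.range σ, w a := by
  have hrange : ∑ a with a ∈ Set.range σ, w a = ∑ t, w (σ t) := by
    rw [← sum_image hσ.injOn]
    congr 1
    ext a
    simp
  rw [sub_eq_iff_eq_add', ← hrange, sum_filter_add_sum_filter_not]

theorem sum_topkProb_snoc [Field K] [LinearOrder K] [IsStrictOrderedRing K] {w : α → K}
    {σ : Fin k → α} (hσ : σ.Injective) (hw : ∀ a ∉ Set.range σ, 0 < w a)
    (hk : k < Fintype.card α) :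
    ∑ a with a ∉ Set.range σ, topkProb w (Fin.snoc σ a : Fin (k + 1) → α) = topkProb w σ := by
  obtain ⟨b, hb⟩ : ∃ b, b ∉ Set.range σ := by
    by_contra! hsurj
    exact hk.not_ge (by simpa using Fintype.card_le_of_surjective σ hsurj)
  have hpos : 0 < ∑ a with a ∉ Set.range σ, w a :=
    sum_pos (fun a ha => hw a (mem_filter.mp ha).2) ⟨b, by simpa using hb⟩
  simp only [topkProb_snoc, sum_sub_sum_comp_eq_sum_notMem_range w hσ]
  rw [← mul_sum, ← sum_div, div_self hpos.ne', mul_one]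

theorem sum_embedding_extending_eq_sum_snoc {M : Type*} [AddCommMonoid M] (hk : k < n)
    (σ : Fin k → α) (f : (Fin n ↪ α) → M) :
    ∑ τ : Fin n ↪ α with ∀ j, τ (Fin.castLE hk.le j) = σ j, f τ =
      ∑ a with a ∉ Set.range σ,
        ∑ τ : Fin n ↪ α with
          ∀ j, τ (Fin.castLE hk j) = (Fin.snoc σ a : Fin (k + 1) → α) j, f τ := by
  have hfresh : ∀ τ ∈ univ.filter fun τ : Fin n ↪ α => ∀ j, τ (Fin.castLE hk.le j) = σ j,
      τ ⟨k, hk⟩ ∈ univ.filter fun a => a ∉ Set.range σ := by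
    simp only [mem_filter_univ]
    rintro τ hτ ⟨j, hj⟩
    have hpos : Fin.castLE hk.le j = ⟨k, hk⟩ := τ.injective ((hτ j).trans hj)
    exact j.isLt.ne (congrArg Fin.val hpos)
  rw [← sum_fiberwise_of_maps_to hfresh]
  refine sum_congr rfl fun a _ => sum_congr ?_ fun _ _ => rfl
  ext τ
  simp only [mem_filter, mem_univ, true_and, Fin.forall_fin_succ', Fin.snoc_castSucc, Fin.snoc_last]
  rfl

theorem permProb_topk_marginal_general [Field K] [LinearOrder K] [IsStrictOrderedRing K]
    (hk : k ≤ n) (hn : n ≤ Fintype.card α) {w : α → K} {σ : Fin k → α} (hσ : σ.Injective)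
    (hw : ∀ a ∉ Set.range σ, 0 < w a) :
    ∑ τ : Fin n ↪ α with ∀ j, τ (Fin.castLE hk j) = σ j, topkProb w τ = topkProb w σ := by
  induction hk using Nat.decreasingInduction with
  | self =>
    have hfilter : (univ.filter fun τ : Fin n ↪ α => ∀ j, τ (Fin.castLE le_rfl j) = σ j) =
        {⟨σ, hσ⟩} := by
      ext τ
      simp [DFunLike.ext_iff]
    rw [hfilter, sum_singleton, Function.Embedding.coeFn_mk]
  | of_succ k hk ih =>
    rw [sum_embedding_extending_eq_sum_snoc hk, ← sum_topkProb_snoc hσ hw (hk.trans_le hn)]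
    refine sum_congr rfl fun a ha => ih ?_ fun b hb => hw b ?_
    · exact Fin.snoc_injective_iff.mpr ⟨hσ, (mem_filter.mp ha).2⟩
    · rintro ⟨j, rfl⟩
      exact hb ⟨j.castSucc, Fin.snoc_castSucc ..⟩

end SequentialSampling

theorem permProb_eq_topkProb {m : ℕ} (w : Fin m → ℝ) (π : Equiv.Perm (Fin m)) :
    permProb w π = topkProb w π := by
  refine prod_congr rfl fun j _ => congrArg (w (π j) / ·) ?_
  rw [eq_sub_iff_add_eq, ← Equiv.sum_comp π w, ← sum_filter_add_sum_filter_not univ (j ≤ ·)]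
  simp only [not_le]

theorem sum_permProb_eq_sum_topkProb {m : ℕ} (w : Fin m → ℝ) (p : (Fin m ↪ Fin m) → Prop)
    [DecidablePred p] :
    ∑ π : Equiv.Perm (Fin m) with p π.toEmbedding, permProb w π =
      ∑ τ : Fin m ↪ Fin m with p τ, topkProb w τ :=
  sum_equiv (Equiv.embeddingEquivOfFinite (Fin m)).symm
    (fun _ => by simp only [mem_filter_univ]; rfl) fun π _ => permProb_eq_topkProb w π

/-- The top-`k` marginal of the permutation probability: summing `P_w(π)` over all
permutations whose first `k` positions are `σ_1, …, σ_k` gives the partial product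
`∏_{j=1}^k w_{σ_j} / (W − ∑_{t<j} w_{σ_t})` where `W = ∑_l w_l`. -/
theorem permProb_topk_marginal {m k : ℕ} (hk1 : 1 ≤ k) (hk : k ≤ m) (w : Fin m → ℝ) (hw : ∀ j, 0 < w j)
    (σ : Fin k → Fin m) (hσ : Function.Injective σ) :
    ∑ π ∈ Finset.univ.filter
        (fun π : Equiv.Perm (Fin m) => ∀ j : Fin k, π (Fin.castLE hk j) = σ j),
        permProb w π
      = ∏ j : Fin k,
          w (σ j) /
            ((∑ l : Fin m, w l) - ∑ t ∈ Finset.univ.filter (fun t => t < j), w (σ t)) := by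
  exact (sum_permProb_eq_sum_topkProb w fun τ => ∀ j, τ (Fin.castLE hk j) = σ j).trans
    (permProb_topk_marginal_general hk (Fintype.card_fin m).ge hσ fun a _ => hw a)
end

section
/- Let w = (w_1, …, w_m) be a positive weight vector, π a permutation of {1, …, m}, and 1 ≤ ℓ < ℓ' ≤ m. Let π' be the permutation obtained by moving the item in position ℓ of π to position ℓ' (π'_{ℓ'} = π_ℓ, π'_k = π_{k+1} for ℓ ≤ k ≤ ℓ'−1, and π'_k = π_k otherwise). Writing λ_j := w_{π_j} and Λ_j := ∑_{k=j}^m λ_k, one has the identity log P_w(π) − log P_w(π') = ∑_{j=ℓ+1}^{ℓ'} ( log(Λ_j − λ_j + λ_ℓ) − log Λ_j ). -/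
open Finset

/-! The numerators of `permProb w π` are the weights in some order, so its logarithm depends on `π`
only through the tail sums `Λ_j`. Moving the item in position `ℓ` to position `ℓ'` replaces `π` by
`π * Fin.cycleIcc ℓ ℓ'`. For `ℓ < j ≤ ℓ'` the cycle factors as `(ℓ … j) (j … ℓ')`; the second factor
permutes the positions from `j` on, and the first then exchanges `π_j` for `π_ℓ` among their items.
For every other `j` the tail keeps its set of items. -/

section CycleIcc

variable {n : ℕ} {i j k : Fin n}

theorem eq_comp_cycleIcc {α : Type*} {f g : Fin n → α} (hij : i ≤ j) (hlast : g j = f i)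
    (hfixed : ∀ k, k < i ∨ j < k → g k = f k)
    (hshift : ∀ k, i ≤ k → ∀ hkj : k < j, g k = f ⟨k + 1, lt_of_le_of_lt hkj j.isLt⟩) :
    g = f ∘ Fin.cycleIcc i j := by
  have : NeZero n := ⟨i.pos.ne'⟩
  funext k
  rw [Function.comp_apply]
  rcases lt_or_ge k i with hki | hik
  · rw [Fin.cycleIcc_of_lt hki, hfixed k (.inl hki)]
  rcases lt_trichotomy k j with hkj | rfl | hjk
  · rw [Fin.cycleIcc_of_ge_of_lt hik hkj, hshift k hik hkj]
    exact congrArg f (Fin.ext (Fin.val_add_one_of_lt' (by lia)).symm)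
  · rw [Fin.cycleIcc_of_last hij, hlast]
  · rw [Fin.cycleIcc_of_gt hjk, hfixed k (.inr hjk)]

variable {M : Type*} [AddCommMonoid M]

theorem sum_Ici_comp_cycleIcc_of_le (hji : j ≤ i) (f : Fin n → M) :
    ∑ x ∈ Ici j, f (Fin.cycleIcc i k x) = ∑ x ∈ Ici j, f x := by
  refine Equiv.Perm.sum_comp _ _ f fun x hx => mem_coe.2 (mem_Ici.2 ?_)
  by_contra! hxj
  exact hx (Fin.cycleIcc_of_lt (hxj.trans_le hji))

theorem sum_Ici_comp_cycleIcc_of_notMem_Ioc (hj : j ∉ Ioc i k) (f : Fin n → M) :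
    ∑ x ∈ Ici j, f (Fin.cycleIcc i k x) = ∑ x ∈ Ici j, f x := by
  rcases le_or_gt j i with hji | hij
  · exact sum_Ici_comp_cycleIcc_of_le hji f
  · have hkj : k < j := by simpa [hij] using hj
    exact sum_congr rfl fun x hx => by rw [Fin.cycleIcc_of_gt (hkj.trans_le (mem_Ici.1 hx))]

theorem sum_Ici_comp_cycleIcc_of_mem_Icc (hj : j ∈ Icc i k) (f : Fin n → M) :
    ∑ x ∈ Ici j, f (Fin.cycleIcc i k x) = f i + ∑ x ∈ Ioi j, f x := by
  have : NeZero n := ⟨i.pos.ne'⟩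
  obtain ⟨hij, hjk⟩ := mem_Icc.1 hj
  calc ∑ x ∈ Ici j, f (Fin.cycleIcc i k x)
      = ∑ x ∈ Ici j, f (Fin.cycleIcc i j (Fin.cycleIcc j k x)) := by
        simp only [← Fin.cycleIcc.trans hij hjk, Function.comp_apply]
    _ = ∑ x ∈ Ici j, f (Fin.cycleIcc i j x) :=
        sum_Ici_comp_cycleIcc_of_le le_rfl fun x => f (Fin.cycleIcc i j x)
    _ = f (Fin.cycleIcc i j j) + ∑ x ∈ Ioi j, f (Fin.cycleIcc i j x) :=
        (add_sum_Ioi_eq_sum_Ici j).symm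
    _ = f i + ∑ x ∈ Ioi j, f x := by
        rw [Fin.cycleIcc_of_last hij]
        exact congrArg _ (sum_congr rfl fun x hx => by rw [Fin.cycleIcc_of_gt (mem_Ioi.1 hx)])

end CycleIcc

section PermProb

variable {m : ℕ} {w : Fin m → ℝ}

theorem log_permProb (hw : ∀ j, 0 < w j) (π : Equiv.Perm (Fin m)) :
    Real.log (permProb w π)
      = ∑ j, Real.log (w j) - ∑ j, Real.log (∑ k ∈ Ici j, w (π k)) := by
  have tail_pos (j : Fin m) : 0 < ∑ k ∈ Ici j, w (π k) :=
    sum_pos (fun k _ => hw (π k)) nonempty_Ici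
  simp only [permProb, filter_le_eq_Ici]
  rw [Real.log_prod fun j _ => (div_pos (hw (π j)) (tail_pos j)).ne',
    ← Equiv.sum_comp π fun j => Real.log (w j), ← sum_sub_distrib]
  exact sum_congr rfl fun j _ => Real.log_div (hw (π j)).ne' (tail_pos j).ne'

theorem log_permProb_sub_log_permProb_mul_cycleIcc (hw : ∀ j, 0 < w j)
    (π : Equiv.Perm (Fin m)) (l l' : Fin m) :
    Real.log (permProb w π) - Real.log (permProb w (π * Fin.cycleIcc l l'))
      = ∑ j ∈ Ioc l l', (Real.log (w (π l) + ∑ k ∈ Ioi j, w (π k))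
          - Real.log (∑ k ∈ Ici j, w (π k))) := by
  rw [log_permProb hw, log_permProb hw, sub_sub_sub_cancel_left, ← sum_sub_distrib,
    ← sum_subset (subset_univ (Ioc l l'))]
  · refine sum_congr rfl fun j hj => ?_
    simp only [Equiv.Perm.mul_apply]
    rw [sum_Ici_comp_cycleIcc_of_mem_Icc (Ioc_subset_Icc_self hj) fun k => w (π k)]
  · intro j _ hj
    simp only [Equiv.Perm.mul_apply]
    rw [sum_Ici_comp_cycleIcc_of_notMem_Ioc hj fun k => w (π k), sub_self]

end PermProb

/-- Moving the item in position `ℓ` of `π` to position `ℓ' > ℓ` changes the log permutation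
probability by `∑_{j=ℓ+1}^{ℓ'} (log(Λ_j − λ_j + λ_ℓ) − log Λ_j)`, where `λ_j := w_{π_j}` and
`Λ_j := ∑_{k=j}^m λ_k`. -/
theorem log_permProb_move_identity {m : ℕ} (w : Fin m → ℝ) (hw : ∀ j, 0 < w j)
    (π π' : Equiv.Perm (Fin m)) (l l' : Fin m) (hll' : l < l')
    (h1 : π' l' = π l)
    (h2 : ∀ k : Fin m, (k : ℕ) < (l : ℕ) ∨ (l' : ℕ) < (k : ℕ) → π' k = π k)
    (h3 : ∀ k : Fin m, ∀ _ : (l : ℕ) ≤ (k : ℕ), ∀ hk2 : (k : ℕ) < (l' : ℕ),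
        π' k = π ⟨(k : ℕ) + 1, lt_of_le_of_lt hk2 l'.isLt⟩) :
    Real.log (permProb w π) - Real.log (permProb w π')
      = ∑ j ∈ Finset.univ.filter (fun j : Fin m => l < j ∧ j ≤ l'),
          (Real.log ((∑ k ∈ Finset.univ.filter (fun k => j ≤ k), w (π k)) - w (π j) + w (π l))
            - Real.log (∑ k ∈ Finset.univ.filter (fun k => j ≤ k), w (π k))) := by
  obtain rfl : π' = π * Fin.cycleIcc l l' :=
    DFunLike.coe_injective (eq_comp_cycleIcc hll'.le h1 h2 h3)
  simp only [filter_le_eq_Ici, filter_lt_le_eq_Ioc]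
  rw [log_permProb_sub_log_permProb_mul_cycleIcc hw]
  refine sum_congr rfl fun j _ => ?_
  rw [← add_sum_Ioi_eq_sum_Ici j, add_sub_cancel_left, add_comm (w (π l))]
end
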